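/- arXiv:1509.02424 — 10 statements merged into one kernel-verified Lean document; each statement's English description precedes it below -/
import Mathlib

section
/- Let P be a preference profile with linear preference orders over a finite set A of alternatives and let A' ⊆ A. (1) If c ∈ A ∖ A' is not an (A' ∪ {c})-majority winner, then in the profile restricted to the alternatives A' ∪ {c}, c is not the successive winner under any agenda over A' ∪ {c} in which c precedes all alternatives of A'. (2) If A ∖ A' ≠ ∅ and every alternative c ∈ A ∖ A' is an (A' ∪ {c})-majority winner, then for every agenda L over A the successive winner of P under L does not belong to A'. -/
open scoped Classical

/-- The number of voters in profile `prof` who strictly prefer `b` to `c`. -/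
noncomputable def prefCount {α : Type*} {n : ℕ} (prof : Fin n → α → α → Prop) (b c : α) : ℕ :=
  (Finset.univ.filter fun i => prof i b c).card

/-- Alternative `b` beats alternative `c`: more than `n/2` voters prefer `b` to `c`. -/
def Beats {α : Type*} {n : ℕ} (prof : Fin n → α → α → Prop) (b c : α) : Prop :=
  2 * prefCount prof b c > n

/-- `a` is an `S`-majority winner: more than `n/2` voters prefer `a`
to every alternative of `S \ {a}`. -/
def IsMajWinner {α : Type*} {n : ℕ} (prof : Fin n → α → α → Prop) (S : Finset α) (a : α) :
    Prop :=
  2 * (Finset.univ.filter fun i => ∀ c ∈ S, c ≠ a → prof i a c).card > n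

/-- The successive winner for the agenda given as a list: the first alternative of the
agenda that is a majority winner with respect to itself and all later alternatives. -/
noncomputable def succWinner {α : Type*} [DecidableEq α] {n : ℕ}
    (prof : Fin n → α → α → Prop) : List α → Option α
  | [] => none
  | a :: rest =>
    if IsMajWinner prof ((a :: rest).toFinset) a then some a
    else succWinner prof rest

/-- The amendment winner for the agenda given as a list: the current round winner is
challenged by the next alternative on the agenda, which takes over if it beats it. -/
noncomputable def amendWinner {α : Type*} {n : ℕ}
    (prof : Fin n → α → α → Prop) : List α → Option α
  | [] => none
  | a :: rest => some (rest.foldl (fun win c => if Beats prof c win then c else win) a)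

theorem succWinner_mem {α : Type*} [DecidableEq α] {n : ℕ}
    (prof : Fin n → α → α → Prop) (a : α) (L : List α) (h : succWinner prof L = some a) :
    a ∈ L := by
  induction L with
  | nil => simp [succWinner] at h
  | cons b rest ih =>
    rw [succWinner] at h
    split_ifs at h
    · simp_all
    · exact List.mem_cons_of_mem _ (ih h)

theorem maj_mono {α : Type*} {n : ℕ} (prof : Fin n → α → α → Prop) (S T : Finset α) (a : α)
    (hST : S ⊆ T) (h : IsMajWinner prof T a) : IsMajWinner prof S a := by
  unfold IsMajWinner at *
  refine lt_of_lt_of_le h (Nat.mul_le_mul_left _ (Finset.card_le_card ?_))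
  intro i hi
  simp only [Finset.mem_filter, Finset.mem_univ, true_and] at *
  exact fun c hc => hi c (hST hc)

theorem maj_unique {α : Type*} {n : ℕ} (prof : Fin n → α → α → Prop)
    (hlin : ∀ i, IsStrictTotalOrder α (prof i)) (S T : Finset α) (a b : α) (hab : a ≠ b)
    (ha : b ∈ S) (hb : a ∈ T) (h : IsMajWinner prof S a) (h' : IsMajWinner prof T b) :
    False := by
  unfold IsMajWinner at *
  have hd : Disjoint (Finset.univ.filter fun i => ∀ c ∈ S, c ≠ a → prof i a c)
      (Finset.univ.filter fun i => ∀ c ∈ T, c ≠ b → prof i b c) := by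
    rw [Finset.disjoint_left]
    intro i hi hj
    simp only [Finset.mem_filter, Finset.mem_univ, true_and] at hi hj
    have := hlin i
    exact irrefl_of (prof i) a (trans_of (prof i) (hi b ha hab.symm) (hj a hb hab))
  have h1 := Finset.card_union_of_disjoint hd
  have h2 := Finset.card_le_univ ((Finset.univ.filter fun i => ∀ c ∈ S, c ≠ a → prof i a c) ∪
      (Finset.univ.filter fun i => ∀ c ∈ T, c ≠ b → prof i b c))
  rw [Fintype.card_fin] at h2
  omega

/-- (1) If `c ∉ A'` is not an `(A' ∪ {c})`-majority winner, then in the profile restricted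
to `A' ∪ {c}` (which, for the successive procedure, amounts to running the procedure on an
agenda listing exactly the alternatives of `A' ∪ {c}`), `c` is not the successive winner
under any agenda in which `c` precedes all alternatives of `A'`.
(2) If `A ∖ A' ≠ ∅` and every `c ∈ A ∖ A'` is an `(A' ∪ {c})`-majority winner, then under
every agenda the successive winner does not belong to `A'`. -/
theorem stmt1 {α : Type*} [Fintype α] [DecidableEq α] {n : ℕ}
    (prof : Fin n → α → α → Prop)
    (hlin : ∀ i, IsStrictTotalOrder α (prof i))
    (A' : Finset α) :
    (∀ c ∉ A', ¬ IsMajWinner prof (insert c A') c →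
      ∀ rest : List α, rest.Nodup → rest.toFinset = A' →
        succWinner prof (c :: rest) ≠ some c) ∧
    ((Finset.univ \ A').Nonempty →
      (∀ c ∉ A', IsMajWinner prof (insert c A') c) →
      ∀ L : List α, L.Nodup → (∀ a : α, a ∈ L) →
        ∀ a ∈ A', succWinner prof L ≠ some a) := by
  refine ⟨?_, ?_⟩
  · intro c hc hn rest _ hr h
    rw [succWinner, List.toFinset_cons, hr, if_neg hn] at h
    have := succWinner_mem prof c rest h
    exact hc (hr ▸ List.mem_toFinset.2 this)
  · rintro ⟨x, hx⟩ hw L _ hL a ha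
    have hx' : x ∉ A' := by simpa using hx
    have key : ∀ L : List α, (∃ x ∈ L, x ∉ A') → succWinner prof L ≠ some a := by
      intro L
      induction L with
      | nil => simp
      | cons b rest ih =>
        rintro ⟨y, hy, hyA⟩ h
        rw [succWinner] at h
        split_ifs at h with hb
        · have hba : b = a := by simpa using h
          subst hba
          have hne : b ≠ y := fun e => hyA (e ▸ ha)
          exact maj_unique prof hlin _ _ b y hne (List.mem_toFinset.2 hy)
            (Finset.mem_insert_of_mem ha) hb (hw y hyA)
        · by_cases hr : ∃ z ∈ rest, z ∉ A'
          · exact ih hr h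
          · push Not at hr
            have hyb : y = b := by
              rcases List.mem_cons.1 hy with e | e
              · exact e
              · exact absurd (hr y e) hyA
            subst hyb
            apply hb
            refine maj_mono prof _ _ _ ?_ (hw y hyA)
            intro z hz
            rw [List.mem_toFinset, List.mem_cons] at hz
            rcases hz with e | e
            · simp [e]
            · exact Finset.mem_insert_of_mem (hr z e)
    exact key L ⟨x, hL x, hx'⟩
end

section
/- Let P be a preference profile with linear preference orders over a finite set A of alternatives, with an odd number n of voters, and let p ∈ A. There exists an agenda over A under which p is the amendment winner of P if and only if for every alternative c ∈ A ∖ {p} there is a sequence p = x_0, x_1, …, x_t = c of alternatives such that x_{ℓ−1} beats x_ℓ for every ℓ ∈ {1, …, t} (that is, every other alternative is reachable from p by a directed path in the majority tournament of P). -/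
open scoped Classical

theorem beats_total_aux {α : Type*} {n : ℕ} (hodd : Odd n)
    (prof : Fin n → α → α → Prop)
    (hlin : ∀ i, IsStrictTotalOrder α (prof i)) (a b : α) (hab : a ≠ b)
    (h : ¬ Beats prof b a) : Beats prof a b := by
  have key : n ≤ prefCount prof a b + prefCount prof b a := by
    have h1 : (Finset.univ : Finset (Fin n)) ⊆
        (Finset.univ.filter fun i => prof i a b) ∪ (Finset.univ.filter fun i => prof i b a) := by
      intro i _
      simp only [Finset.mem_union, Finset.mem_filter, Finset.mem_univ, true_and]
      by_contra hc
      push Not at hc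
      haveI := hlin i
      exact hab (Std.Trichotomous.trichotomous (r := prof i) a b hc.1 hc.2)
    have h2 := (Finset.card_le_card h1).trans (Finset.card_union_le _ _)
    simpa [prefCount] using h2
  unfold Beats at *
  obtain ⟨k, rfl⟩ := hodd
  omega

theorem foldl_reach_aux {α : Type*} {n : ℕ}
    (prof : Fin n → α → α → Prop)
    (ht : ∀ a b : α, a ≠ b → ¬ Beats prof b a → Beats prof a b) (M : List α) :
    ∀ a c : α, c ∈ a :: M → Relation.ReflTransGen (Beats prof)
      (M.foldl (fun win c => if Beats prof c win then c else win) a) c := by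
  induction M with
  | nil =>
    intro a c hc
    simp only [List.mem_singleton] at hc
    subst hc
    exact Relation.ReflTransGen.refl
  | cons y M ih =>
    intro a c hc
    rw [List.foldl_cons]
    by_cases h : Beats prof y a
    · simp only [h, if_true]
      rcases List.mem_cons.1 hc with rfl | hc
      · exact (ih y y (by simp)).tail h
      · exact ih y c hc
    · simp only [h, if_false]
      rcases List.mem_cons.1 hc with rfl | hc
      · exact ih c c (by simp)
      · rcases List.mem_cons.1 hc with rfl | hc
        · by_cases e : a = c
          · subst e
            exact ih a a (by simp)
          · exact (ih a a (by simp)).tail (ht a c e h)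
        · exact ih a c (by simp [hc])

theorem exists_cross_aux {α : Type*} (r : α → α → Prop) (M : List α) (p c : α)
    (h : Relation.TransGen r p c) (hp : p ∈ M) (hc : c ∉ M) :
    ∃ x y, x ∈ M ∧ y ∉ M ∧ r x y := by
  induction h with
  | single h => exact ⟨_, _, hp, hc, h⟩
  | @tail b d _ h ih =>
    by_cases hb : b ∈ M
    · exact ⟨_, _, hb, hc, h⟩
    · exact ih hb

theorem exists_agenda_aux {α : Type*} {n : ℕ}
    (prof : Fin n → α → α → Prop) (p : α)
    (h : ∀ c : α, c ≠ p → Relation.TransGen (Beats prof) p c) (k : ℕ) :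
    ∃ M : List α, M.Nodup ∧ p ∈ M ∧ amendWinner prof M = some p ∧
      (∀ w x, x ∈ M → Beats prof x w →
        M.foldl (fun win c => if Beats prof c win then c else win) w = p) ∧
      ((∀ a, a ∈ M) ∨ k ≤ M.length) := by
  induction k with
  | zero =>
    refine ⟨[p], by simp, by simp, by simp [amendWinner], ?_, by simp⟩
    intro w x hx hb
    simp only [List.mem_singleton] at hx
    subst hx
    simp [hb]
  | succ k ih =>
    obtain ⟨M, hnd, hp, hw, hinv, hall⟩ := ih
    by_cases ha : ∀ a, a ∈ M
    · exact ⟨M, hnd, hp, hw, hinv, Or.inl ha⟩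
    have hlen := hall.resolve_left ha
    push Not at ha
    obtain ⟨c, hc⟩ := ha
    obtain ⟨x, y, hx, hy, hxy⟩ := exists_cross_aux _ M p c
      (h c (fun e => hc (e ▸ hp))) hp hc
    refine ⟨y :: M, by simp [hnd, hy], by simp [hp], ?_, ?_, ?_⟩
    · simp only [amendWinner]
      rw [hinv y x hx hxy]
    · intro w z hz hb
      rw [List.foldl_cons]
      by_cases hyw : Beats prof y w
      · simp only [hyw, if_true]
        exact hinv y x hx hxy
      · simp only [hyw, if_false]
        rcases List.mem_cons.1 hz with rfl | hz
        · exact absurd hb hyw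
        · exact hinv w z hz hb
    · right
      simpa using hlen

/-- With an odd number of voters, there is an agenda under which `p` is the amendment winner
iff every other alternative is reachable from `p` by a directed path in the majority
tournament (i.e., by a nonempty chain of `Beats` steps). -/
theorem stmt3 {α : Type*} [Fintype α] [DecidableEq α] {n : ℕ} (hodd : Odd n)
    (prof : Fin n → α → α → Prop)
    (hlin : ∀ i, IsStrictTotalOrder α (prof i))
    (p : α) :
    (∃ L : List α, L.Nodup ∧ (∀ a : α, a ∈ L) ∧ amendWinner prof L = some p) ↔
    (∀ c : α, c ≠ p → Relation.TransGen (Beats prof) p c) := by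
  constructor
  · rintro ⟨L, -, hall, hw⟩ c hc
    cases L with
    | nil => simp [amendWinner] at hw
    | cons a M =>
      have := foldl_reach_aux prof (beats_total_aux hodd prof hlin) M a c (hall c)
      simp only [amendWinner, Option.some.injEq] at hw
      rw [hw] at this
      rcases Relation.reflTransGen_iff_eq_or_transGen.1 this with e | e
      · exact absurd e hc
      · exact e
  · intro h
    obtain ⟨M, hnd, _, hw, _, hall⟩ := exists_agenda_aux prof p h (Fintype.card α + 1)
    refine ⟨M, hnd, ?_, hw⟩
    rcases hall with hall | hlen
    · exact hall
    · have := hnd.length_le_card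
      omega
end

section
/- Let P be a preference profile with linear preference orders over a finite set A of m alternatives with an odd number n of voters, and let L = a_1 ▷ a_2 ▷ … ▷ a_m be an agenda such that for every i ∈ {2, …, m}, alternative a_i beats a_{i−1}. Then a_m is the amendment winner of P under L. In particular, if a Hamiltonian cycle of the majority tournament is traversed in reverse orientation starting at the predecessor of p and ending at p, the resulting agenda makes p the amendment winner. -/
open scoped Classical

/-- If in the agenda `L = a_1 ▷ … ▷ a_m` every alternative beats its predecessor,
then the last alternative of the agenda is the amendment winner. -/
theorem stmt4 {α : Type*} [Fintype α] [DecidableEq α] {n : ℕ} (hodd : Odd n)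
    (prof : Fin n → α → α → Prop)
    (hlin : ∀ i, IsStrictTotalOrder α (prof i))
    (L : List α) (hnodup : L.Nodup) (hcomplete : ∀ a : α, a ∈ L)
    (hchain : L.Chain' (fun x y => Beats prof y x))
    (p : α) (hlast : L.getLast? = some p) :
    amendWinner prof L = some p := by
  clear hnodup hcomplete
  cases L with
  | nil => simp at hlast
  | cons a rest =>
    simp only [amendWinner]
    induction rest generalizing a with
    | nil => simpa using hlast
    | cons b t ih =>
      have h := List.isChain_cons_cons.mp hchain
      rw [List.foldl_cons, if_pos h.1]
      exact ih b h.2 (by simpa [List.getLast?_cons_cons] using hlast)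
end

section
/- Let P be a preference profile with linear preference orders over a finite set A of alternatives with an odd number n of voters. If p ∈ A is a Condorcet winner of P, that is, p beats every other alternative, then p is the amendment winner of P under every agenda over A. -/
open scoped Classical

theorem not_beats_aux {α : Type*} {n : ℕ} (prof : Fin n → α → α → Prop)
    (hlin : ∀ i, IsStrictTotalOrder α (prof i)) (p c : α) (h : Beats prof p c) :
    ¬ Beats prof c p := by
  intro h'
  unfold Beats prefCount at h h'
  have hd : Disjoint (Finset.univ.filter fun i => prof i p c)
      (Finset.univ.filter fun i => prof i c p) := by
    rw [Finset.disjoint_filter]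
    intro i _ h1 h2
    have := hlin i
    exact irrefl_of (prof i) p (trans_of (prof i) h1 h2)
  have h3 := Finset.card_le_univ ((Finset.univ.filter fun i => prof i p c) ∪
      (Finset.univ.filter fun i => prof i c p))
  rw [Finset.card_union_of_disjoint hd, Fintype.card_fin] at h3
  omega

theorem foldl_aux {α : Type*} {n : ℕ} (prof : Fin n → α → α → Prop)
    (hlin : ∀ i, IsStrictTotalOrder α (prof i))
    (p : α) (hcond : ∀ c : α, c ≠ p → Beats prof p c) :
    ∀ (L : List α) (a : α), p ∈ a :: L →
      L.foldl (fun win c => if Beats prof c win then c else win) a = p := by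
  intro L
  induction L with
  | nil => intro a h; simpa using (List.mem_singleton.mp h).symm
  | cons b L ih =>
    intro a h
    rw [List.foldl_cons]
    apply ih
    rcases List.mem_cons.mp h with h | h
    · subst h
      by_cases hb : b = p
      · simp [hb]
      · simp [not_beats_aux prof hlin p b (hcond b hb)]
    · rcases List.mem_cons.mp h with h | h
      · subst h
        by_cases ha : a = p
        · simp [ha]
        · simp [hcond a ha]
      · exact List.mem_cons_of_mem _ h

/-- With an odd number of voters, a Condorcet winner is the amendment winner
under every agenda. -/
theorem stmt5 {α : Type*} [Fintype α] [DecidableEq α] {n : ℕ} (hodd : Odd n)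
    (prof : Fin n → α → α → Prop)
    (hlin : ∀ i, IsStrictTotalOrder α (prof i))
    (p : α) (hcond : ∀ c : α, c ≠ p → Beats prof p c) :
    ∀ L : List α, L.Nodup → (∀ a : α, a ∈ L) → amendWinner prof L = some p := by
  intro L _ hL
  cases L with
  | nil => exact absurd (hL p) (by simp)
  | cons a L => exact congrArg some (foldl_aux prof hlin p hcond L a (hL p))
end

section
/- Let P be a preference profile with linear preference orders over a finite set A of alternatives, let L be an agenda over A, let k ≥ 0 be an integer and p ∈ A. If there exists a list of k linear orders over A whose addition to P makes p the successive winner (respectively, the amendment winner, assuming the total number of voters after addition makes the procedure well defined) under L, then there exists a single linear order ≻* over A such that adding k voters each with preference order ≻* to P makes p the successive winner (respectively, the amendment winner) under L. -/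
open scoped Classical

theorem aux_card_le {β : Type*} {n k : ℕ} (prof : Fin n → β) (man : Fin k → β) (r : β)
    (Q : β → Prop) (hr : Q r) :
    (Finset.univ.filter fun i => Q (Fin.append prof man i)).card ≤
      (Finset.univ.filter fun i => Q (Fin.append prof (fun _ : Fin k => r) i)).card := by
  apply Finset.card_le_card
  intro i
  simp only [Finset.mem_filter, Finset.mem_univ, true_and]
  refine Fin.addCases (fun i => ?_) (fun i => ?_) i
  · simp [Fin.append_left]
  · simp [Fin.append_right, hr]

theorem aux_card_ge {β : Type*} {n k : ℕ} (prof : Fin n → β) (man : Fin k → β) (r : β)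
    (Q : β → Prop) (hr : ¬ Q r) :
    (Finset.univ.filter fun i => Q (Fin.append prof (fun _ : Fin k => r) i)).card ≤
      (Finset.univ.filter fun i => Q (Fin.append prof man i)).card := by
  apply Finset.card_le_card
  intro i
  simp only [Finset.mem_filter, Finset.mem_univ, true_and]
  refine Fin.addCases (fun i => ?_) (fun i => ?_) i
  · simp [Fin.append_left]
  · simp [Fin.append_right, hr]

theorem aux_order {α : Type*} [DecidableEq α] (R : List α) (hc : ∀ a, a ∈ R) (hn : R.Nodup) :
    ∃ r : α → α → Prop, IsStrictTotalOrder α r ∧ R.Pairwise r := by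
  refine ⟨fun x y => R.idxOf x < R.idxOf y, ?_, ?_⟩
  · exact
      { irrefl := fun a => lt_irrefl _
        trans := fun a b c h1 h2 => lt_trans h1 h2
        trichotomous := fun a b h1 h2 =>
          (List.idxOf_inj (hc a)).1 (le_antisymm (not_lt.1 h2) (not_lt.1 h1)) }
  · rw [List.pairwise_iff_getElem]
    intro i j hi hj hij
    rw [hn.idxOf_getElem, hn.idxOf_getElem]
    exact hij

theorem aux_succ_mem {α : Type*} [DecidableEq α] {n : ℕ} (prof : Fin n → α → α → Prop) (p : α) :
    ∀ l : List α, succWinner prof l = some p → p ∈ l := by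
  intro l
  induction l with
  | nil => simp [succWinner]
  | cons a rest ih =>
    intro h
    rw [succWinner] at h
    split_ifs at h with hm
    · simp_all
    · exact List.mem_cons_of_mem _ (ih h)

theorem aux_succ {α : Type*} [DecidableEq α] {n k : ℕ} (prof : Fin n → α → α → Prop)
    (man : Fin k → α → α → Prop) (r : α → α → Prop) (p : α)
    (h1 : ∀ c, c ≠ p → r p c) (h2 : ∀ c, ¬ r c p) :
    ∀ l : List α, l.Nodup → succWinner (Fin.append prof man) l = some p →
      succWinner (Fin.append prof (fun _ : Fin k => r)) l = some p := by
  intro l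
  induction l with
  | nil => simp [succWinner]
  | cons a rest ih =>
    intro hn h
    rw [succWinner] at h ⊢
    split_ifs at h with hm
    · obtain rfl : a = p := by simpa using h
      rw [if_pos]
      unfold IsMajWinner at hm ⊢
      refine lt_of_lt_of_le hm (Nat.mul_le_mul_left 2 ?_)
      convert aux_card_le prof man r
        (fun q => ∀ c ∈ (a :: rest).toFinset, c ≠ a → q a c) (fun c _ hc => h1 c hc)
    · have hp := aux_succ_mem _ _ _ h
      have hne : p ≠ a := by
        rintro rfl
        exact (List.nodup_cons.1 hn).1 hp
      rw [if_neg, ih (List.nodup_cons.1 hn).2 h]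
      intro hm'
      apply hm
      unfold IsMajWinner at hm' ⊢
      refine lt_of_lt_of_le hm' (Nat.mul_le_mul_left 2 ?_)
      convert aux_card_ge prof man r
        (fun q => ∀ c ∈ (a :: rest).toFinset, c ≠ a → q a c)
        (fun hq => h2 a (hq p (by simp [hp]) hne))

theorem aux_amend {α : Type*} {n k : ℕ} (prof : Fin n → α → α → Prop)
    (man : Fin k → α → α → Prop) :
    ∀ (l : List α) (a : α), ∃ R : List α, R.Perm (a :: l) ∧
      ∀ r : α → α → Prop, IsStrictTotalOrder α r → R.Pairwise r →
        l.foldl (fun win c =>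
          if Beats (Fin.append prof (fun _ : Fin k => r)) c win then c else win) a =
        l.foldl (fun win c => if Beats (Fin.append prof man) c win then c else win) a := by
  intro l
  induction l with
  | nil => exact fun a => ⟨[a], List.Perm.refl _, fun _ _ _ => rfl⟩
  | cons c l ih =>
    intro a
    by_cases hb : Beats (Fin.append prof man) c a
    · obtain ⟨R, hR, h⟩ := ih c
      refine ⟨R ++ [a], (List.perm_append_singleton a R).trans (hR.cons a), fun r hr hp => ?_⟩
      rw [List.pairwise_append] at hp
      have hca : r c a := hp.2.2 c (hR.mem_iff.2 (by simp)) a (by simp)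
      have hb' : Beats (Fin.append prof (fun _ : Fin k => r)) c a := by
        unfold Beats prefCount at hb ⊢
        have := aux_card_le prof man r (fun q => q c a) hca
        omega
      rw [List.foldl_cons, List.foldl_cons, if_pos hb, if_pos hb']
      exact h r hr hp.1
    · obtain ⟨R, hR, h⟩ := ih a
      refine ⟨R ++ [c], ((List.perm_append_singleton c R).trans (hR.cons c)).trans
        (List.Perm.swap _ _ _), fun r hr hp => ?_⟩
      rw [List.pairwise_append] at hp
      have hac : r a c := hp.2.2 a (hR.mem_iff.2 (by simp)) c (by simp)
      have hca : ¬ r c a := fun hca => hr.irrefl a (hr.trans _ _ _ hac hca)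
      have hb' : ¬ Beats (Fin.append prof (fun _ : Fin k => r)) c a := by
        unfold Beats prefCount at hb ⊢
        have := aux_card_ge prof man r (fun q => q c a) hca
        omega
      rw [List.foldl_cons, List.foldl_cons, if_neg hb, if_neg hb']
      exact h r hr hp.1

/-- If some list of `k` linear orders added to the profile makes `p` the successive
(resp. amendment, assuming an odd total number of voters) winner under `L`, then the same
can be achieved by `k` manipulators all casting one common linear order. -/
theorem stmt6 {α : Type*} [Fintype α] [DecidableEq α] {n : ℕ}
    (prof : Fin n → α → α → Prop)
    (hlin : ∀ i, IsStrictTotalOrder α (prof i))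
    (L : List α) (hnodup : L.Nodup) (hcomplete : ∀ a : α, a ∈ L)
    (k : ℕ) (p : α) :
    ((∃ man : Fin k → α → α → Prop, (∀ j, IsStrictTotalOrder α (man j)) ∧
        succWinner (Fin.append prof man) L = some p) →
      (∃ r : α → α → Prop, IsStrictTotalOrder α r ∧
        succWinner (Fin.append prof (fun _ : Fin k => r)) L = some p)) ∧
    (Odd (n + k) →
      (∃ man : Fin k → α → α → Prop, (∀ j, IsStrictTotalOrder α (man j)) ∧
        amendWinner (Fin.append prof man) L = some p) →
      (∃ r : α → α → Prop, IsStrictTotalOrder α r ∧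
        amendWinner (Fin.append prof (fun _ : Fin k => r)) L = some p)) := by
  constructor
  · rintro ⟨man, -, h⟩
    obtain ⟨r, hr, hp⟩ := aux_order (p :: L.erase p)
      (fun a => (List.perm_cons_erase (hcomplete p)).mem_iff.1 (hcomplete a))
      ((List.perm_cons_erase (hcomplete p)).nodup_iff.1 hnodup)
    have h1 : ∀ c, c ≠ p → r p c := fun c hc =>
      (List.pairwise_cons.1 hp).1 c ((List.mem_erase_of_ne hc).2 (hcomplete c))
    refine ⟨r, hr, aux_succ prof man r p h1 (fun c hc => ?_) L hnodup h⟩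
    by_cases e : c = p
    · subst e
      exact hr.irrefl _ hc
    · exact hr.irrefl _ (hr.trans _ _ _ hc (h1 c e))
  · rintro - ⟨man, -, h⟩
    cases L with
    | nil => simp [amendWinner] at h
    | cons a l =>
      obtain ⟨R, hR, hf⟩ := aux_amend prof man l a
      obtain ⟨r, hr, hp⟩ := aux_order R (fun x => hR.mem_iff.2 (hcomplete x))
        (hR.nodup_iff.2 hnodup)
      refine ⟨r, hr, ?_⟩
      rw [amendWinner] at h ⊢
      rw [hf r hr hp, h]
end

section
/- For both the successive and the amendment procedure the following holds. Let P be a preference profile with linear preference orders over a finite set A of alternatives (each original voter having weight 1), let L be an agenda over A, let p ∈ A, and let w ≥ 1 be an integer. There exist additional voters with linear orders over A and positive integer weights summing to w whose addition to P makes p the winner under L (with majorities counted by weight) if and only if there exist w additional unweighted voters (weight 1 each) whose addition to P makes p the winner under L. -/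
open scoped Classical

/-- The total weight of the voters in weighted profile `(w, prof)` preferring `b` to `c`. -/
noncomputable def wPrefCount {α : Type*} {n : ℕ} (w : Fin n → ℕ)
    (prof : Fin n → α → α → Prop) (b c : α) : ℕ :=
  ∑ i ∈ Finset.univ.filter (fun i => prof i b c), w i

/-- `b` beats `c` by weighted majority. -/
def WBeats {α : Type*} {n : ℕ} (w : Fin n → ℕ) (prof : Fin n → α → α → Prop)
    (b c : α) : Prop :=
  2 * wPrefCount w prof b c > ∑ i, w i

/-- `a` is a weighted `S`-majority winner: the voters preferring `a` to every alternative
of `S \ {a}` have total weight more than half of the total weight. -/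
def WIsMajWinner {α : Type*} {n : ℕ} (w : Fin n → ℕ) (prof : Fin n → α → α → Prop)
    (S : Finset α) (a : α) : Prop :=
  2 * (∑ i ∈ Finset.univ.filter (fun i => ∀ c ∈ S, c ≠ a → prof i a c), w i) > ∑ i, w i

/-- The weighted successive winner for the agenda given as a list. -/
noncomputable def wSuccWinner {α : Type*} [DecidableEq α] {n : ℕ} (w : Fin n → ℕ)
    (prof : Fin n → α → α → Prop) : List α → Option α
  | [] => none
  | a :: rest =>
    if WIsMajWinner w prof ((a :: rest).toFinset) a then some a
    else wSuccWinner w prof rest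

/-- The weighted amendment winner for the agenda given as a list. -/
noncomputable def wAmendWinner {α : Type*} {n : ℕ} (w : Fin n → ℕ)
    (prof : Fin n → α → α → Prop) : List α → Option α
  | [] => none
  | a :: rest => some (rest.foldl (fun win c => if WBeats w prof c win then c else win) a)

theorem winners_congr {α : Type*} [DecidableEq α] {m m' : ℕ} (w : Fin m → ℕ) (w' : Fin m' → ℕ)
    (P : Fin m → α → α → Prop) (P' : Fin m' → α → α → Prop)
    (h : ∀ Q : (α → α → Prop) → Prop,
      ∑ i ∈ Finset.univ.filter (fun i => Q (P i)), w i
        = ∑ i ∈ Finset.univ.filter (fun i => Q (P' i)), w' i) (L : List α) :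
    wSuccWinner w P L = wSuccWinner w' P' L ∧ wAmendWinner w P L = wAmendWinner w' P' L := by
  have ht : ∑ i, w i = ∑ i, w' i := by simpa using h (fun _ => True)
  have hb : ∀ b c, WBeats w P b c ↔ WBeats w' P' b c := by
    intro b c
    unfold WBeats wPrefCount
    rw [ht, h (fun r => r b c)]
  have hm : ∀ S a, WIsMajWinner w P S a ↔ WIsMajWinner w' P' S a := by
    intro S a
    unfold WIsMajWinner
    have h2 := h (fun r => ∀ c ∈ S, c ≠ a → r a c)
    rw [ht]
    convert Iff.rfl using 3
    convert h2.symm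
  constructor
  · induction L with
    | nil => rfl
    | cons a l ih => simp only [wSuccWinner, hm, ih]
  · cases L with
    | nil => rfl
    | cons a l => simp only [wAmendWinner, hb]

theorem split_sum {α : Type*} {n k : ℕ} (prof : Fin n → α → α → Prop)
    (man : Fin k → α → α → Prop) (mw : Fin k → ℕ) (Q : (α → α → Prop) → Prop) :
    ∑ i ∈ Finset.univ.filter (fun i => Q ((Fin.append prof man : Fin (n + k) → α → α → Prop) i)),
        (Fin.append (fun _ : Fin n => 1) mw : Fin (n + k) → ℕ) i
      = ∑ i ∈ Finset.univ.filter (fun i => Q ((Fin.append prof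
          (fun x : Fin (∑ j, mw j) => man (finSigmaFinEquiv.symm x).1) :
            Fin (n + ∑ j, mw j) → α → α → Prop) i)), (fun _ => 1) i := by
  rw [Finset.sum_filter, Finset.sum_filter, Fin.sum_univ_add, Fin.sum_univ_add]
  simp only [Fin.append_left, Fin.append_right]
  congr 1
  rw [← finSigmaFinEquiv.sum_comp, Fintype.sum_sigma]
  refine Finset.sum_congr rfl fun j _ => ?_
  simp only [Equiv.symm_apply_apply]
  simp

theorem append_one (n k : ℕ) :
    (Fin.append (fun _ : Fin n => 1) (fun _ : Fin k => 1) : Fin (n + k) → ℕ) = fun _ => 1 := by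
  funext i
  refine Fin.addCases (fun i => ?_) (fun i => ?_) i <;> simp

/-- For both the successive and the amendment procedure: there is a weighted manipulation
(additional voters with positive integer weights summing to `wtot`) making `p` win under
`L` iff there is an unweighted manipulation by `wtot` voters (weight `1` each) making `p`
win under `L`, where the original voters all have weight `1`. -/
theorem stmt9 {α : Type*} [Fintype α] [DecidableEq α] {n : ℕ}
    (prof : Fin n → α → α → Prop)
    (hlin : ∀ i, IsStrictTotalOrder α (prof i))
    (L : List α) (hnodup : L.Nodup) (hcomplete : ∀ a : α, a ∈ L)
    (p : α) (wtot : ℕ) (hwtot : 1 ≤ wtot) :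
    ((∃ k : ℕ, ∃ man : Fin k → α → α → Prop, ∃ mw : Fin k → ℕ,
        (∀ j, IsStrictTotalOrder α (man j)) ∧ (∀ j, 0 < mw j) ∧ (∑ j, mw j) = wtot ∧
        wSuccWinner (Fin.append (fun _ : Fin n => 1) mw) (Fin.append prof man) L = some p) ↔
      (∃ man : Fin wtot → α → α → Prop, (∀ j, IsStrictTotalOrder α (man j)) ∧
        wSuccWinner (fun _ : Fin (n + wtot) => 1) (Fin.append prof man) L = some p)) ∧
    ((∃ k : ℕ, ∃ man : Fin k → α → α → Prop, ∃ mw : Fin k → ℕ,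
        (∀ j, IsStrictTotalOrder α (man j)) ∧ (∀ j, 0 < mw j) ∧ (∑ j, mw j) = wtot ∧
        wAmendWinner (Fin.append (fun _ : Fin n => 1) mw) (Fin.append prof man) L = some p) ↔
      (∃ man : Fin wtot → α → α → Prop, (∀ j, IsStrictTotalOrder α (man j)) ∧
        wAmendWinner (fun _ : Fin (n + wtot) => 1) (Fin.append prof man) L = some p)) := by
  constructor
  · constructor
    · rintro ⟨k, man, mw, hm, -, rfl, h⟩
      exact ⟨fun x => man (finSigmaFinEquiv.symm x).1, fun j => hm _,
        (winners_congr _ _ _ _ (split_sum prof man mw) L).1 ▸ h⟩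
    · rintro ⟨man, hm, h⟩
      exact ⟨wtot, man, fun _ => 1, hm, fun _ => Nat.one_pos, by simp, by rw [append_one]; exact h⟩
  · constructor
    · rintro ⟨k, man, mw, hm, -, rfl, h⟩
      exact ⟨fun x => man (finSigmaFinEquiv.symm x).1, fun j => hm _,
        (winners_congr _ _ _ _ (split_sum prof man mw) L).2 ▸ h⟩
    · rintro ⟨man, hm, h⟩
      exact ⟨wtot, man, fun _ => 1, hm, fun _ => Nat.one_pos, by simp, by rw [append_one]; exact h⟩
end

section
/- Let G = (U, E) be an undirected graph with U = {u_1, …, u_r}, r ≥ 3, E = {e_1, …, e_s}, and let h be an integer with 2 ≤ h ≤ r−1. Consider the partial profile with 2r−3 voters, alternative set A = {p, d} ∪ {c_j : e_j ∈ E}, and agenda L: c_1 ▷ c_2 ▷ … ▷ c_s ▷ p ▷ d constructed from G and h as described. Then G has an independent set of size at least h if and only if there is a completion of the vertex voters' partial orders to linear orders under which p is the successive winner under L. -/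
open scoped Classical

/-- The alternatives of the reduction: the preferred alternative `P`, the dummy
alternative `D`, and one edge alternative `C j` for each edge `e_j`. -/
inductive Alt (s : ℕ) : Type
  | P : Alt s
  | D : Alt s
  | C : Fin s → Alt s
  deriving DecidableEq

/-- Edge `j` is incident to vertex `i`. -/
def Inc {r s : ℕ} (e : Fin s → Fin r × Fin r) (i : Fin r) (j : Fin s) : Prop :=
  (e j).1 = i ∨ (e j).2 = i

/-- The strict partial order of the vertex voter `v_i`: the transitive closure of
`⟨I(u_i)⟩ ≻ p ≻ ⟨A ∖ ({p,d} ∪ I(u_i))⟩` together with `d ≻ ⟨A ∖ ({p,d} ∪ I(u_i))⟩`,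
where the fixed order on edge alternatives is the index order. -/
def vVoter {r s : ℕ} (e : Fin s → Fin r × Fin r) (i : Fin r) :
    Alt s → Alt s → Prop := fun x y =>
  match x, y with
  | Alt.C j, Alt.C j' =>
      (Inc e i j ∧ ¬ Inc e i j') ∨ (Inc e i j ∧ Inc e i j' ∧ j < j') ∨
        (¬ Inc e i j ∧ ¬ Inc e i j' ∧ j < j')
  | Alt.C j, Alt.P => Inc e i j
  | Alt.P, Alt.C j => ¬ Inc e i j
  | Alt.D, Alt.C j => ¬ Inc e i j
  | _, _ => False

/-- The linear order `⟨A ∖ {p,d}⟩ ≻ d ≻ p` of the first group of auxiliary voters. -/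
def aux1 {s : ℕ} : Alt s → Alt s → Prop := fun x y =>
  match x, y with
  | Alt.C j, Alt.C j' => j < j'
  | Alt.C _, Alt.D => True
  | Alt.C _, Alt.P => True
  | Alt.D, Alt.P => True
  | _, _ => False

/-- The linear order `⟨A ∖ {p,d}⟩ ≻ p ≻ d` of the second group of auxiliary voters. -/
def aux2 {s : ℕ} : Alt s → Alt s → Prop := fun x y =>
  match x, y with
  | Alt.C j, Alt.C j' => j < j'
  | Alt.C _, Alt.P => True
  | Alt.C _, Alt.D => True
  | Alt.P, Alt.D => True
  | _, _ => False

/-- The partial profile of the reduction: `r` vertex voters, `h − 2` auxiliary voters of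
the first kind, and `r − h − 1` auxiliary voters of the second kind (`2r − 3` voters). -/
def profile10 (r s h : ℕ) (e : Fin s → Fin r × Fin r) :
    Fin (2 * r - 3) → Alt s → Alt s → Prop := fun idx =>
  if hi : (idx : ℕ) < r then vVoter e ⟨idx, hi⟩
  else if (idx : ℕ) < r + (h - 2) then aux1
  else aux2

/-- The agenda `c_1 ▷ c_2 ▷ … ▷ c_s ▷ p ▷ d` of the reduction. -/
def agenda10 (s : ℕ) : List (Alt s) :=
  (List.finRange s).map Alt.C ++ [Alt.P, Alt.D]


lemma succ_fwd {s n : ℕ} (prof : Fin n → Alt s → Alt s → Prop) (l : List (Fin s))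
    (hl : l.Pairwise (· < ·))
    (hw : succWinner prof (l.map Alt.C ++ [Alt.P, Alt.D]) = some Alt.P) :
    IsMajWinner prof ([Alt.P, Alt.D] : List (Alt s)).toFinset Alt.P ∧
    ∀ j ∈ l, ∃ T : Finset (Alt s), (∀ j' < j, Alt.C j' ∉ T) ∧ ¬ IsMajWinner prof T (Alt.C j) := by
  induction l with
  | nil =>
    simp only [List.map_nil, List.nil_append, succWinner] at hw
    refine ⟨?_, by simp⟩
    by_contra hc
    rw [if_neg hc] at hw
    split_ifs at hw
    simp at hw
  | cons a l ih =>
    rw [List.pairwise_cons] at hl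
    simp only [List.map_cons, List.cons_append, succWinner] at hw
    split_ifs at hw with hc
    · simp at hw
    · obtain ⟨h1, h2⟩ := ih hl.2 hw
      refine ⟨h1, ?_⟩
      intro j hj
      rcases List.mem_cons.1 hj with rfl | hj
      · refine ⟨_, ?_, hc⟩
        intro j' hj' hm
        simp at hm
        rcases hm with hm | hm
        · exact absurd hj' (by rw [hm]; exact lt_irrefl _)
        · exact absurd (hl.1 _ hm) (not_lt.2 hj'.le)
      · exact h2 j hj

lemma succ_bwd {s n : ℕ} (prof : Fin n → Alt s → Alt s → Prop) (l : List (Fin s))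
    (hP : IsMajWinner prof ([Alt.P, Alt.D] : List (Alt s)).toFinset Alt.P)
    (hC : ∀ j, ∀ T : Finset (Alt s), Alt.P ∈ T → Alt.D ∈ T → ¬ IsMajWinner prof T (Alt.C j)) :
    succWinner prof (l.map Alt.C ++ [Alt.P, Alt.D]) = some Alt.P := by
  induction l with
  | nil =>
    simp only [List.map_nil, List.nil_append, succWinner]
    rw [if_pos hP]
  | cons a l ih =>
    simp only [List.map_cons, List.cons_append, succWinner]
    rw [if_neg (hC a _ (by simp) (by simp))]
    exact ih

lemma maj_of {α : Type*} {n : ℕ} (prof : Fin n → α → α → Prop) (S : Finset α) (a : α)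
    (X : Finset (Fin n)) (hX : ∀ i ∈ X, ∀ c ∈ S, c ≠ a → prof i a c) (hc : n < 2 * X.card) :
    IsMajWinner prof S a := by
  unfold IsMajWinner
  refine lt_of_lt_of_le hc (Nat.mul_le_mul_left 2 (Finset.card_le_card ?_))
  intro i hi
  simpa using hX i hi

lemma maj_to {α : Type*} {n : ℕ} (prof : Fin n → α → α → Prop) (S : Finset α) (a : α)
    (hm : IsMajWinner prof S a)
    (X : Finset (Fin n)) (hX : ∀ i, (∀ c ∈ S, c ≠ a → prof i a c) → i ∈ X) :
    n < 2 * X.card := by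
  unfold IsMajWinner at hm
  refine lt_of_lt_of_le hm (Nat.mul_le_mul_left 2 (Finset.card_le_card ?_))
  intro i hi
  exact hX i (by simpa using hi)

lemma card_ge (n a : ℕ) : (Finset.univ.filter fun i : Fin n => a ≤ (i : ℕ)).card = n - a := by
  rw [← Finset.card_map Fin.valEmbedding, ← Nat.card_Ico]
  congr 1
  ext x
  simp only [Finset.mem_map, Finset.mem_filter, Finset.mem_univ, true_and, Fin.valEmbedding_apply,
    Finset.mem_Ico]
  constructor
  · rintro ⟨i, hi, rfl⟩
    exact ⟨hi, i.2⟩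
  · rintro ⟨h1, h2⟩
    exact ⟨⟨x, h2⟩, h1, rfl⟩

/-- Rank function of the completed profile. -/
noncomputable def rk (r s h : ℕ) (e : Fin s → Fin r × Fin r) (S : Finset (Fin r))
    (idx : Fin (2 * r - 3)) : Alt s → ℕ := fun x =>
  if hi : (idx : ℕ) < r then
    if (⟨idx, hi⟩ : Fin r) ∈ S then
      match x with
      | Alt.P => s
      | Alt.D => s + 1
      | Alt.C j => if Inc e ⟨idx, hi⟩ j then j else s + 2 + j
    else
      match x with
      | Alt.P => s + 1
      | Alt.D => 0
      | Alt.C j => if Inc e ⟨idx, hi⟩ j then 1 + j else s + 2 + j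
  else if (idx : ℕ) < r + (h - 2) then
      match x with
      | Alt.P => s + 1
      | Alt.D => s
      | Alt.C j => j
  else
      match x with
      | Alt.P => s
      | Alt.D => s + 1
      | Alt.C j => j

lemma rk_inj (r s h : ℕ) (e : Fin s → Fin r × Fin r) (S : Finset (Fin r))
    (idx : Fin (2 * r - 3)) : Function.Injective (rk r s h e S idx) := by
  intro x y hxy
  unfold rk at hxy
  rcases x with _ | _ | j <;> rcases y with _ | _ | j' <;> dsimp only at hxy <;>
    split_ifs at hxy <;> simp [Fin.ext_iff] <;> omega

lemma rk_ext (r s h : ℕ) (e : Fin s → Fin r × Fin r) (S : Finset (Fin r))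
    (idx : Fin (2 * r - 3)) (x y : Alt s) (hxy : profile10 r s h e idx x y) :
    rk r s h e S idx x < rk r s h e S idx y := by
  unfold profile10 at hxy
  unfold rk
  rcases x with _ | _ | j <;> rcases y with _ | _ | j' <;>
    dsimp only <;>
    split_ifs at hxy ⊢ <;> simp_all [vVoter, aux1, aux2] <;> omega

/-- `G` has an independent set of size at least `h` iff some completion of the
constructed partial profile makes `p` the successive winner under the agenda
`c_1 ▷ … ▷ c_s ▷ p ▷ d`. -/
theorem stmt10 (r s h : ℕ) (hr : 3 ≤ r) (hh : 2 ≤ h) (hhr : h ≤ r - 1)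
    (e : Fin s → Fin r × Fin r) (he : ∀ j, (e j).1 ≠ (e j).2) :
    (∃ S : Finset (Fin r), h ≤ S.card ∧ ∀ j, ¬ ((e j).1 ∈ S ∧ (e j).2 ∈ S)) ↔
    (∃ comp : Fin (2 * r - 3) → Alt s → Alt s → Prop,
      (∀ idx, IsStrictTotalOrder (Alt s) (comp idx) ∧
        ∀ x y, profile10 r s h e idx x y → comp idx x y) ∧
      succWinner comp (agenda10 s) = some Alt.P) := by
  have hle : r ≤ 2 * r - 3 := by omega
  constructor
  · rintro ⟨S, hS, hind⟩
    refine ⟨fun idx x y => rk r s h e S idx x < rk r s h e S idx y, fun idx => ⟨?_, ?_⟩, ?_⟩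
    · exact (RelEmbedding.preimage ⟨_, rk_inj r s h e S idx⟩ (· < ·)).isStrictTotalOrder
    · exact rk_ext r s h e S idx
    · apply succ_bwd
      · apply maj_of _ _ _ (S.map (Fin.castLEEmb hle) ∪
            (Finset.univ.filter fun i : Fin (2 * r - 3) => r + (h - 2) ≤ (i : ℕ)))
        · intro i hi
          simp only [Finset.mem_union, Finset.mem_map, Finset.mem_filter, Finset.mem_univ,
            true_and] at hi ⊢
          intro c hc hcP
          have : c = Alt.D := by simpa [hcP] using hc
          subst this
          rcases hi with ⟨a, ha, rfl⟩ | hi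
          · have h1 : ((Fin.castLEEmb hle a : Fin (2 * r - 3)) : ℕ) < r := a.2
            have h2 : (⟨_, h1⟩ : Fin r) ∈ S := ha
            simp only [rk, dif_pos h1, if_pos h2]
            omega
          · have h1 : ¬ (i : ℕ) < r := by omega
            have h2 : ¬ (i : ℕ) < r + (h - 2) := by omega
            simp only [rk, dif_neg h1, if_neg h2]
            omega
        rw [Finset.card_union_of_disjoint, Finset.card_map, card_ge]
        · omega
        · rw [Finset.disjoint_left]
          intro i hi hi'
          simp only [Finset.mem_map, Finset.mem_filter, Finset.mem_univ, true_and] at hi hi'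
          obtain ⟨a, ha, rfl⟩ := hi
          have h1 : ((Fin.castLEEmb hle a : Fin (2 * r - 3)) : ℕ) < r := a.2
          omega
      · intro j T hPT hDT
        intro hm
        have hc := maj_to _ _ _ hm
            ((S.filter fun a => Inc e a j).map (Fin.castLEEmb hle) ∪
            (Finset.univ.filter fun i : Fin (2 * r - 3) => r ≤ (i : ℕ))) (by
          intro i hi
          simp only [Finset.mem_union, Finset.mem_map, Finset.mem_filter, Finset.mem_univ,
            true_and] at hi ⊢
          have hp := hi _ hPT (by simp)
          have hd := hi _ hDT (by simp)
          by_cases h1 : (i : ℕ) < r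
          · left
            refine ⟨⟨i, h1⟩, ?_, rfl⟩
            simp only [rk, dif_pos h1] at hp hd
            by_cases h2 : (⟨i, h1⟩ : Fin r) ∈ S
            · refine ⟨h2, ?_⟩
              by_contra h3
              simp only [if_pos h2, if_neg h3] at hp
              omega
            · simp only [if_neg h2] at hd
              omega
          · right
            omega)
        have hc2 := Finset.card_union_le
            ((S.filter fun a => Inc e a j).map (Fin.castLEEmb hle))
            (Finset.univ.filter fun i : Fin (2 * r - 3) => r ≤ (i : ℕ))
        rw [Finset.card_map, card_ge] at hc2
        have h1 : (S.filter fun a => Inc e a j).card ≤ 1 := by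
          rw [Finset.card_le_one]
          intro a ha b hb
          rw [Finset.mem_filter] at ha hb
          simp only [Inc] at ha hb
          have := hind j
          rcases ha with ⟨ha, rfl | rfl⟩ <;> rcases hb with ⟨hb, hb' | hb'⟩
          · exact hb'
          · exact absurd ⟨ha, hb' ▸ hb⟩ this
          · exact absurd ⟨hb' ▸ hb, ha⟩ this
          · exact hb'
        omega
  · rintro ⟨comp, hcomp, hw⟩
    obtain ⟨hP, hC⟩ := succ_fwd comp (List.finRange s) (List.pairwise_lt_finRange s) hw
    have htr : ∀ i x y z, comp i x y → comp i y z → comp i x z := fun i x y z h1 h2 =>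
      (hcomp i).1.toIsStrictOrder.toIsTrans.trans x y z h1 h2
    have hir : ∀ i x, ¬ comp i x x := fun i x h1 =>
      (hcomp i).1.toIsStrictOrder.toIrrefl.irrefl x h1
    refine ⟨Finset.univ.filter fun a => comp (Fin.castLE hle a) Alt.P Alt.D, ?_, ?_⟩
    · have hc := maj_to _ _ _ hP
          ((Finset.univ.filter fun a => comp (Fin.castLE hle a) Alt.P Alt.D).map
            (Fin.castLEEmb hle) ∪
          (Finset.univ.filter fun i : Fin (2 * r - 3) => r + (h - 2) ≤ (i : ℕ))) (by
        intro i hi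
        simp only [Finset.mem_union, Finset.mem_map, Finset.mem_filter, Finset.mem_univ,
            true_and] at hi ⊢
        have hd := hi Alt.D (by simp) (by simp)
        by_cases h1 : (i : ℕ) < r
        · left
          exact ⟨⟨i, h1⟩, hd, rfl⟩
        · right
          by_contra h2
          have h3 := (hcomp i).2 Alt.D Alt.P (by
            unfold profile10
            rw [dif_neg h1, if_pos (by omega)]
            trivial)
          exact hir i _ (htr i _ _ _ hd h3))
      have hc2 := Finset.card_union_le
          ((Finset.univ.filter fun a => comp (Fin.castLE hle a) Alt.P Alt.D).map
            (Fin.castLEEmb hle))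
          (Finset.univ.filter fun i : Fin (2 * r - 3) => r + (h - 2) ≤ (i : ℕ))
      rw [Finset.card_map, card_ge] at hc2
      omega
    · rintro j ⟨hu, hv⟩
      obtain ⟨T, hT, hmaj⟩ := hC j (List.mem_finRange j)
      apply hmaj
      simp only [Finset.mem_filter, Finset.mem_univ, true_and] at hu hv
      apply maj_of _ _ _ (({(e j).1, (e j).2} : Finset (Fin r)).map (Fin.castLEEmb hle) ∪
            (Finset.univ.filter fun i : Fin (2 * r - 3) => r ≤ (i : ℕ)))
      · intro i hi
        simp only [Finset.mem_union, Finset.mem_map, Finset.mem_filter, Finset.mem_univ,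
            true_and, Finset.mem_insert, Finset.mem_singleton] at hi ⊢
        intro c hcT hcj
        have hlt : ∀ j', c = Alt.C j' → j < j' := by
          rintro j' rfl
          rcases lt_trichotomy j j' with h1 | h1 | h1
          · exact h1
          · exact absurd (by rw [h1]) hcj
          · exact absurd hcT (hT _ h1)
        rcases hi with ⟨a, ha, rfl⟩ | hi
        · have hinc : Inc e a j := by
            rcases ha with rfl | rfl
            · exact Or.inl rfl
            · exact Or.inr rfl
          have hpd : comp (Fin.castLE hle a) Alt.P Alt.D := by
            rcases ha with rfl | rfl
            · exact hu
            · exact hv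
          have hprof : profile10 r s h e (Fin.castLE hle a) = vVoter e a := by
            unfold profile10
            rw [dif_pos (show ((Fin.castLE hle a : Fin (2 * r - 3)) : ℕ) < r from a.2)]
            rfl
          have hx := (hcomp (Fin.castLE hle a)).2
          rw [hprof] at hx
          change comp (Fin.castLE hle a) (Alt.C j) c
          rcases c with _ | _ | j'
          · exact hx _ _ hinc
          · exact htr _ _ _ _ (hx (Alt.C j) Alt.P hinc) hpd
          · apply hx
            have := hlt j' rfl
            simp only [vVoter]
            tauto
        · apply (hcomp i).2
          unfold profile10
          rw [dif_neg (by omega)]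
          rcases c with _ | _ | j'
          · split_ifs <;> trivial
          · split_ifs <;> trivial
          · have := hlt j' rfl
            split_ifs <;> exact this
      rw [Finset.card_union_of_disjoint, Finset.card_map, card_ge, Finset.card_pair (he j)]
      · omega
      · rw [Finset.disjoint_left]
        intro i hi hi'
        simp only [Finset.mem_map, Finset.mem_filter, Finset.mem_univ, true_and] at hi hi'
        obtain ⟨a, ha, rfl⟩ := hi
        have h1 : ((Fin.castLEEmb hle a : Fin (2 * r - 3)) : ℕ) < r := a.2
        omega
end

section
/- Let x_1, …, x_r be positive integers with x_1 + … + x_r = 2K. Consider the weighted partial profile over the alternatives A = {p, a, b} with: for each i, a number voter v_i of weight x_i whose strict partial order consists only of a ≻ p (b is incomparable to both a and p); and one dummy voter of weight 1 with the linear order p ≻ b ≻ a. Let the agenda be L: a ▷ b ▷ p. Then there is a partition of the multiset {x_1, …, x_r} into two parts each summing to K if and only if there is a completion of the number voters' partial orders to linear orders under which p is the weighted successive winner under L. -/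
open scoped Classical

/-- The three alternatives `p`, `a`, `b` of the Partition reduction. -/
inductive Alt3 : Type
  | A : Alt3
  | B : Alt3
  | P : Alt3
  deriving DecidableEq

/-- The partial order of every number voter: only `a ≻ p`. -/
def numVoter : Alt3 → Alt3 → Prop := fun x y => x = Alt3.A ∧ y = Alt3.P

/-- The linear order `p ≻ b ≻ a` of the dummy voter. -/
def dummyVoter : Alt3 → Alt3 → Prop := fun x y =>
  match x, y with
  | Alt3.P, Alt3.B => True
  | Alt3.P, Alt3.A => True
  | Alt3.B, Alt3.A => True
  | _, _ => False

/-- The partial profile of the reduction: `r` number voters followed by one dummy voter. -/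
def profile17 (r : ℕ) : Fin (r + 1) → Alt3 → Alt3 → Prop := fun idx =>
  if (idx : ℕ) < r then numVoter else dummyVoter

/-- The weights of the reduction: number voter `v_i` has weight `x_i`,
the dummy voter has weight `1`. -/
def weights17 (r : ℕ) (x : Fin r → ℕ) : Fin (r + 1) → ℕ := fun idx =>
  if hi : (idx : ℕ) < r then x ⟨idx, hi⟩ else 1

theorem w17_cast (r : ℕ) (x : Fin r → ℕ) (i : Fin r) : weights17 r x i.castSucc = x i := by
  simp [weights17]

theorem w17_last (r : ℕ) (x : Fin r → ℕ) : weights17 r x (Fin.last r) = 1 := by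
  simp [weights17]

theorem key17 (r K : ℕ) (x : Fin r → ℕ) (hsum : ∑ i, x i = 2 * K)
    (comp : Fin (r + 1) → Alt3 → Alt3 → Prop)
    (h1 : ∀ i : Fin r, comp i.castSucc Alt3.A Alt3.P)
    (h2 : ¬ comp (Fin.last r) Alt3.A Alt3.B)
    (h3 : ¬ comp (Fin.last r) Alt3.B Alt3.P) :
    wSuccWinner (weights17 r x) comp [Alt3.A, Alt3.B, Alt3.P] = some Alt3.P ↔
    (∑ i, if comp i.castSucc Alt3.A Alt3.B then x i else 0) ≤ K ∧
    (∑ i, if comp i.castSucc Alt3.B Alt3.P then x i else 0) ≤ K := by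
  have tot : ∑ i, weights17 r x i = 2 * K + 1 := by
    rw [Fin.sum_univ_castSucc, w17_last]; simp only [w17_cast]; rw [hsum]
  have mA : WIsMajWinner (weights17 r x) comp ([Alt3.A, Alt3.B, Alt3.P].toFinset) Alt3.A ↔
      ¬ (∑ i, if comp i.castSucc Alt3.A Alt3.B then x i else 0) ≤ K := by
    unfold WIsMajWinner
    rw [tot, Finset.sum_filter, Fin.sum_univ_castSucc]
    simp [w17_cast, h1, h2]
    omega
  have mB : WIsMajWinner (weights17 r x) comp ([Alt3.B, Alt3.P].toFinset) Alt3.B ↔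
      ¬ (∑ i, if comp i.castSucc Alt3.B Alt3.P then x i else 0) ≤ K := by
    unfold WIsMajWinner
    rw [tot, Finset.sum_filter, Fin.sum_univ_castSucc]
    simp [w17_cast, h3]
    omega
  have mP : WIsMajWinner (weights17 r x) comp ([Alt3.P].toFinset) Alt3.P := by
    unfold WIsMajWinner
    rw [tot, Finset.sum_filter, Fin.sum_univ_castSucc]
    simp [w17_cast, w17_last, hsum]
  simp only [wSuccWinner, mA, mB, if_pos mP]
  split_ifs <;> simp_all

/-- Ranks used for the completion. -/
def rk17 {r : ℕ} (S : Finset (Fin r)) (idx : Fin (r + 1)) : Alt3 → ℕ := fun c =>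
  if h : (idx : ℕ) < r then
    if (⟨idx, h⟩ : Fin r) ∈ S then
      match c with
      | Alt3.A => 0
      | Alt3.P => 1
      | Alt3.B => 2
    else
      match c with
      | Alt3.B => 0
      | Alt3.A => 1
      | Alt3.P => 2
  else
    match c with
    | Alt3.P => 0
    | Alt3.B => 1
    | Alt3.A => 2

theorem rk17_inj {r : ℕ} (S : Finset (Fin r)) (idx : Fin (r + 1)) (c d : Alt3)
    (h : rk17 S idx c = rk17 S idx d) : c = d := by
  unfold rk17 at h
  split_ifs at h <;> cases c <;> cases d <;> simp_all

/-- The multiset `{x_1, …, x_r}` (summing to `2K`) has a partition into two parts each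
summing to `K` iff some completion of the number voters' partial orders makes `p` the
weighted successive winner under the agenda `a ▷ b ▷ p`. -/
theorem stmt17 (r K : ℕ) (x : Fin r → ℕ) (hx : ∀ i, 0 < x i)
    (hsum : ∑ i, x i = 2 * K) :
    (∃ S : Finset (Fin r), ∑ i ∈ S, x i = K) ↔
    (∃ comp : Fin (r + 1) → Alt3 → Alt3 → Prop,
      (∀ idx, IsStrictTotalOrder Alt3 (comp idx) ∧
        ∀ a b, profile17 r idx a b → comp idx a b) ∧
      wSuccWinner (weights17 r x) comp [Alt3.A, Alt3.B, Alt3.P] = some Alt3.P) := by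
  constructor
  · rintro ⟨S, hS⟩
    refine ⟨fun idx c d => rk17 S idx c < rk17 S idx d, ?_, ?_⟩
    · intro idx
      refine ⟨?_, ?_⟩
      · exact
          { trichotomous := fun c d h1 h2 => rk17_inj S idx c d (by omega)
            irrefl := fun c => lt_irrefl _
            trans := fun _ _ _ => lt_trans }
      · intro c d h
        unfold profile17 at h
        unfold rk17
        split_ifs at h ⊢ <;> cases c <;> cases d <;> simp_all [numVoter, dummyVoter]
    · rw [key17 r K x hsum _ (fun i => ?_) (by simp [rk17]) (by simp [rk17])]
      · have e1 : ∀ i : Fin r, (rk17 S i.castSucc Alt3.A < rk17 S i.castSucc Alt3.B) ↔ i ∈ S := by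
          intro i; by_cases h : i ∈ S <;> simp [rk17, h]
        have e2 : ∀ i : Fin r, (rk17 S i.castSucc Alt3.B < rk17 S i.castSucc Alt3.P) ↔ i ∉ S := by
          intro i; by_cases h : i ∈ S <;> simp [rk17, h]
        simp only [e1, e2]
        have e3 := Finset.sum_filter_add_sum_filter_not Finset.univ (fun i => i ∈ S) x
        rw [← Finset.sum_filter, ← Finset.sum_filter]
        have e4 : ∑ i ∈ Finset.univ.filter (fun i => i ∈ S), x i = K := by
          rw [← hS]; congr 1; ext i; simp
        omega
      · by_cases h : i ∈ S <;> simp [rk17, h]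
  · rintro ⟨comp, hc, hw⟩
    have h1 : ∀ i : Fin r, comp i.castSucc Alt3.A Alt3.P := fun i =>
      (hc i.castSucc).2 _ _ (by simp [profile17, numVoter])
    have as : ∀ i c d, comp i c d → ¬ comp i d c := fun i c d h h' => by
      have := (hc i).1
      exact irrefl_of (comp i) c (trans_of (comp i) h h')
    have h2 := as _ _ _ ((hc (Fin.last r)).2 Alt3.B Alt3.A (by simp [profile17, dummyVoter]))
    have h3 := as _ _ _ ((hc (Fin.last r)).2 Alt3.P Alt3.B (by simp [profile17, dummyVoter]))
    obtain ⟨hA, hB⟩ := (key17 r K x hsum comp h1 h2 h3).1 hw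
    refine ⟨Finset.univ.filter (fun i => comp i.castSucc Alt3.A Alt3.B), ?_⟩
    rw [Finset.sum_filter]
    have : ∑ i, x i ≤ (∑ i, if comp i.castSucc Alt3.A Alt3.B then x i else 0) +
        ∑ i, if comp i.castSucc Alt3.B Alt3.P then x i else 0 := by
      rw [← Finset.sum_add_distrib]
      refine Finset.sum_le_sum fun i _ => ?_
      have := (hc i.castSucc).1
      by_cases hab : comp i.castSucc Alt3.A Alt3.B
      · simp [hab]
      · have hba : comp i.castSucc Alt3.B Alt3.A := by
          rcases trichotomous_of (comp i.castSucc) Alt3.A Alt3.B with h | h | h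
          · exact absurd h hab
          · cases h
          · exact h
        simp [trans_of (comp i.castSucc) hba (h1 i)]
    omega
end

section
/- Let P be a weighted partial profile over a set A of at most three alternatives, where each voter i has a strict partial order over A and a positive integer weight, and let W be the total weight, assumed odd. Let L be an agenda in which alternative p occupies the first or the second position. Then p is the weighted amendment winner under L in every completion of P if and only if for every alternative c ∈ A ∖ {p}, the voters whose partial order already ranks p above c have total weight greater than W/2 (equivalently, p beats c in every completion of P). -/
open scoped Classical

/-- `comp` is a completion of the partial profile `prof`: every voter's strict partial
order is replaced by a linear (strict total) order extending it. -/
def Completes {α : Type*} {n : ℕ} (comp prof : Fin n → α → α → Prop) : Prop :=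
  ∀ i, IsStrictTotalOrder α (comp i) ∧ ∀ x y, prof i x y → comp i x y

theorem ext_aux {α : Type*} (r : α → α → Prop) (hr : IsStrictOrder α r) (p c : α)
    (hne : c ≠ p) (h : ¬ r p c) :
    ∃ s : α → α → Prop, IsStrictTotalOrder α s ∧ (∀ x y, r x y → s x y) ∧ s c p := by
  have hirr : ∀ x, ¬ r x x := fun x => hr.irrefl x
  have htr : ∀ {x y z}, r x y → r y z → r x z := fun {x y z} => hr.trans x y z
  let q : α → α → Prop := fun x y => x = y ∨ r x y ∨ ((x = c ∨ r x c) ∧ (y = p ∨ r p y))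
  have hq : IsPartialOrder α q :=
    { refl := fun x => Or.inl rfl
      trans := by
        intro x y z hxy hyz
        simp only [q] at *
        grind
      antisymm := by
        intro x y hxy hyz
        simp only [q] at *
        grind }
  obtain ⟨s, hs, hle⟩ := extend_partialOrder q
  have hanti : ∀ {x y}, s x y → s y x → x = y := fun {x y} => hs.antisymm x y
  have hstr : ∀ {x y z}, s x y → s y z → s x z := fun {x y z} => hs.trans x y z
  have htot : ∀ x y, s x y ∨ s y x := fun x y => hs.total x y
  refine ⟨fun x y => s x y ∧ x ≠ y, ?_, ?_, ?_⟩
  · exact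
      { irrefl := fun x hx => hx.2 rfl
        trans := by
          rintro x y z ⟨h1, h2⟩ ⟨h3, h4⟩
          refine ⟨hstr h1 h3, ?_⟩
          rintro rfl
          exact h2 (hanti h1 h3)
        trichotomous := by
          intro x y h1 h2
          have := htot x y
          grind }
  · intro x y hxy
    refine ⟨hle x y (Or.inr (Or.inl hxy)), ?_⟩
    rintro rfl
    exact hirr _ hxy
  · exact ⟨hle c p (Or.inr (Or.inr ⟨Or.inl rfl, Or.inl rfl⟩)), hne⟩

theorem beats_iff {α : Type*} {n : ℕ} (w : Fin n → ℕ) (hodd : Odd (∑ i, w i))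
    (comp : Fin n → α → α → Prop) (hc : ∀ i, IsStrictTotalOrder α (comp i))
    (b c : α) (hne : b ≠ c) : WBeats w comp b c ↔ ¬ WBeats w comp c b := by
  have key : wPrefCount w comp b c + wPrefCount w comp c b = ∑ i, w i := by
    unfold wPrefCount
    rw [← Finset.sum_filter_add_sum_filter_not Finset.univ (fun i => comp i b c) w]
    congr 1
    apply Finset.sum_congr _ (fun _ _ => rfl)
    ext i
    simp only [Finset.mem_filter, Finset.mem_univ, true_and]
    constructor
    · intro h1 h2
      exact (hc i).irrefl _ ((hc i).trans _ _ _ h1 h2)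
    · intro h1
      by_contra h2
      exact hne ((hc i).trichotomous _ _ h1 h2)
  unfold WBeats
  obtain ⟨k, hk⟩ := hodd
  omega

theorem amend_iff {α : Type*} [Fintype α] (hcard : Fintype.card α ≤ 3)
    {n : ℕ} (w : Fin n → ℕ) (hodd : Odd (∑ i, w i))
    (L : List α) (hnodup : L.Nodup) (hcomplete : ∀ a : α, a ∈ L)
    (p : α) (hp : p ∈ L.take 2)
    (comp : Fin n → α → α → Prop) (hc : ∀ i, IsStrictTotalOrder α (comp i)) :
    wAmendWinner w comp L = some p ↔ ∀ c, c ≠ p → WBeats w comp p c := by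
  have hb := beats_iff w hodd comp hc
  have hlen : L.length ≤ 3 := le_trans hnodup.length_le_card hcard
  match L, hlen with
  | [], _ => simp at hp
  | [a], _ =>
    simp at hp hcomplete
    subst hp
    simp only [wAmendWinner, List.foldl_nil, true_iff]
    intro c hcp
    exact absurd (hcomplete c) hcp
  | [a, b], _ =>
    simp at hp hcomplete hnodup
    simp [wAmendWinner]
    have h1 := hb a b
    have h4 : (∀ x, x ≠ p → WBeats w comp p x) ↔
        ((a ≠ p → WBeats w comp p a) ∧ (b ≠ p → WBeats w comp p b)) := by
      constructor
      · intro h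
        exact ⟨h a, h b⟩
      · rintro ⟨ha, hb'⟩ x
        rcases hcomplete x with rfl | rfl <;> assumption
    rw [h4]
    clear h4 hcomplete hb
    grind
  | [a, b, c], _ =>
    simp at hp hcomplete hnodup
    simp [wAmendWinner]
    have h1 := hb a b
    have h2 := hb a c
    have h3 := hb b c
    have h4 : (∀ x, x ≠ p → WBeats w comp p x) ↔
        ((a ≠ p → WBeats w comp p a) ∧ (b ≠ p → WBeats w comp p b) ∧
          (c ≠ p → WBeats w comp p c)) := by
      constructor
      · intro h
        exact ⟨h a, h b, h c⟩
      · rintro ⟨ha, hb', hc'⟩ x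
        rcases hcomplete x with rfl | rfl | rfl <;> assumption
    rw [h4]
    clear h4 hcomplete hb
    grind
  | _ :: _ :: _ :: _ :: _, h => simp at h; omega

/-- For a weighted partial profile over at most three alternatives with odd total weight
and an agenda in which `p` occupies the first or the second position: `p` is the weighted
amendment winner in every completion iff for every other alternative `c` the voters whose
partial order already ranks `p` above `c` have total weight more than half of the total
weight. -/
theorem stmt18 {α : Type*} [Fintype α] [DecidableEq α] (hcard : Fintype.card α ≤ 3)
    {n : ℕ} (prof : Fin n → α → α → Prop) (hpo : ∀ i, IsStrictOrder α (prof i))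
    (w : Fin n → ℕ) (hw : ∀ i, 0 < w i) (hodd : Odd (∑ i, w i))
    (L : List α) (hnodup : L.Nodup) (hcomplete : ∀ a : α, a ∈ L)
    (p : α) (hp : p ∈ L.take 2) :
    (∀ comp : Fin n → α → α → Prop, Completes comp prof →
      wAmendWinner w comp L = some p) ↔
    (∀ c : α, c ≠ p → 2 * wPrefCount w prof p c > ∑ i, w i) := by
  constructor
  · intro h c hcp
    have hex : ∀ i, ∃ s : α → α → Prop, IsStrictTotalOrder α s ∧
        (∀ x y, prof i x y → s x y) ∧ (s p c → prof i p c) := by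
      intro i
      by_cases hi : prof i p c
      · have hn : ¬ prof i c p := fun h' =>
          (hpo i).irrefl _ ((hpo i).trans _ _ _ hi h')
        obtain ⟨s, h1, h2, _⟩ := ext_aux (prof i) (hpo i) c p hcp.symm hn
        exact ⟨s, h1, h2, fun _ => hi⟩
      · obtain ⟨s, h1, h2, h3⟩ := ext_aux (prof i) (hpo i) p c hcp hi
        exact ⟨s, h1, h2, fun h' => absurd (h1.trans _ _ _ h3 h') (h1.irrefl _)⟩
    choose comp h1 h2 h3 using hex
    have hw' := (amend_iff hcard w hodd L hnodup hcomplete p hp comp h1).1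
      (h comp fun i => ⟨h1 i, h2 i⟩) c hcp
    have heq : wPrefCount w prof p c = wPrefCount w comp p c := by
      unfold wPrefCount
      apply Finset.sum_congr _ (fun _ _ => rfl)
      ext i
      simp only [Finset.mem_filter, Finset.mem_univ, true_and]
      exact ⟨h2 i p c, h3 i⟩
    rw [heq]
    exact hw'
  · intro h comp hcomp
    refine (amend_iff hcard w hodd L hnodup hcomplete p hp comp fun i => (hcomp i).1).2 ?_
    intro c hcp
    have hle : wPrefCount w prof p c ≤ wPrefCount w comp p c := by
      unfold wPrefCount
      apply Finset.sum_le_sum_of_subset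
      intro i
      simp only [Finset.mem_filter, Finset.mem_univ, true_and]
      exact (hcomp i).2 p c
    have := h c hcp
    unfold WBeats
    omega
end

section
/- Let P be a weighted partial profile over exactly three alternatives a, b, p, where each voter has a strict partial order and a positive integer weight, and let W be the total weight, assumed odd. Let the agenda be L: a ▷ b ▷ p. Then p is the weighted amendment winner under L in every completion of P if and only if it is not the case that [a beats b in some completion of P and a beats p in some completion of P], and it is not the case that [b beats a in some completion of P and b beats p in some completion of P]. -/
open scoped Classical

theorem voter_top {α : Type*} (r : α → α → Prop) (hr : IsStrictOrder α r) (x : α) :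
    ∃ s : α → α → Prop, IsStrictTotalOrder α s ∧ (∀ u v, r u v → s u v) ∧
      ∀ y, y ≠ x → ¬ r y x → s x y := by
  have irr : ∀ u, ¬ r u u := hr.irrefl
  have tr : ∀ u v t, r u v → r v t → r u t := hr.trans
  let D : α → Prop := fun u => r u x ∨ u = x
  have hD : ∀ u v, r u v → D v → D u := by
    rintro u v h (h' | rfl)
    · exact Or.inl (tr _ _ _ h h')
    · exact Or.inl h
  let q : α → α → Prop := fun u v => u = v ∨ r u v ∨ (D u ∧ ¬ D v)
  have hq : IsPartialOrder α q :=
    { refl := fun u => Or.inl rfl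
      trans := by
        intro u v t h1 h2
        rcases h1 with rfl | h1 | h1
        · exact h2
        · rcases h2 with rfl | h2 | h2
          · exact Or.inr (Or.inl h1)
          · exact Or.inr (Or.inl (tr _ _ _ h1 h2))
          · exact Or.inr (Or.inr ⟨hD _ _ h1 h2.1, h2.2⟩)
        · rcases h2 with rfl | h2 | h2
          · exact Or.inr (Or.inr h1)
          · exact Or.inr (Or.inr ⟨h1.1, fun h => h1.2 (hD _ _ h2 h)⟩)
          · exact absurd h2.1 h1.2
      antisymm := by
        intro u v h1 h2
        rcases h1 with rfl | h1 | h1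
        · rfl
        · rcases h2 with h2 | h2 | h2
          · exact h2.symm
          · exact absurd (tr _ _ _ h1 h2) (irr _)
          · exact absurd (hD _ _ h1 h2.1) h2.2
        · rcases h2 with h2 | h2 | h2
          · exact h2.symm
          · exact absurd (hD _ _ h2 h1.1) h1.2
          · exact absurd h2.1 h1.2 }
  obtain ⟨s, hs, hqs⟩ := extend_partialOrder q
  have str : ∀ u v t, s u v → s v t → s u t := hs.trans
  have sas : ∀ u v, s u v → s v u → u = v := hs.antisymm
  have stot : ∀ u v, s u v ∨ s v u := hs.total
  refine ⟨fun u v => s u v ∧ u ≠ v, ?_, ?_, ?_⟩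
  · exact
      { trichotomous := by
          intro u v h1 h2
          by_contra hne
          rcases stot u v with h | h
          · exact h1 ⟨h, hne⟩
          · exact h2 ⟨h, fun e => hne e.symm⟩
        irrefl := fun u h => h.2 rfl
        trans := by
          rintro u v t ⟨h1, n1⟩ ⟨h2, n2⟩
          refine ⟨str _ _ _ h1 h2, ?_⟩
          rintro rfl
          exact n1 (sas _ _ h1 h2) }
  · intro u v h
    refine ⟨hqs _ _ (Or.inr (Or.inl h)), ?_⟩
    rintro rfl
    exact irr _ h
  · intro y hy h
    refine ⟨hqs _ _ (Or.inr (Or.inr ⟨Or.inr rfl, ?_⟩)), fun e => hy e.symm⟩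
    rintro (h' | h')
    · exact h h'
    · exact hy h'

theorem profile_top {α : Type*} {n : ℕ} (w : Fin n → ℕ) (prof : Fin n → α → α → Prop)
    (hpo : ∀ i, IsStrictOrder α (prof i)) (x : α) :
    ∃ comp, Completes comp prof ∧ ∀ y, y ≠ x →
      (∃ c, Completes c prof ∧ WBeats w c x y) → WBeats w comp x y := by
  choose s hs1 hs2 hs3 using fun i => voter_top (prof i) (hpo i) x
  refine ⟨s, fun i => ⟨hs1 i, hs2 i⟩, ?_⟩
  rintro y hy ⟨c, hc, hb⟩
  unfold WBeats at *
  have : wPrefCount w c x y ≤ wPrefCount w s x y := by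
    unfold wPrefCount
    apply Finset.sum_le_sum_of_subset
    intro i hi
    simp only [Finset.mem_filter, Finset.mem_univ, true_and] at hi ⊢
    apply hs3 i y hy
    intro h
    have := (hc i).1
    exact this.irrefl _ (this.trans _ _ _ hi ((hc i).2 _ _ h))
  omega

theorem beats_total {α : Type*} {n : ℕ} (w : Fin n → ℕ) (prof comp : Fin n → α → α → Prop)
    (hc : Completes comp prof) (hodd : Odd (∑ i, w i)) (x y : α) (hxy : x ≠ y) :
    WBeats w comp x y ↔ ¬ WBeats w comp y x := by
  have h : wPrefCount w comp x y + wPrefCount w comp y x = ∑ i, w i := by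
    unfold wPrefCount
    rw [← Finset.sum_filter_add_sum_filter_not Finset.univ (fun i => comp i x y)]
    congr 1
    apply Finset.sum_congr _ (fun _ _ => rfl)
    ext i
    have := (hc i).1
    simp only [Finset.mem_filter, Finset.mem_univ, true_and]
    constructor
    · intro h1 h2
      exact this.irrefl _ (this.trans _ _ _ h1 h2)
    · intro h1
      by_contra h2
      exact hxy (this.trichotomous _ _ h1 h2)
  unfold WBeats
  obtain ⟨k, hk⟩ := hodd
  omega

/-- For a weighted partial profile over exactly the three alternatives `a`, `b`, `p` with
odd total weight and the agenda `a ▷ b ▷ p`: `p` is the weighted amendment winner in every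
completion iff it is not the case that `a` beats `b` in some completion and `a` beats `p`
in some completion, and it is not the case that `b` beats `a` in some completion and `b`
beats `p` in some completion. -/
theorem stmt19 {n : ℕ} (prof : Fin n → Alt3 → Alt3 → Prop)
    (hpo : ∀ i, IsStrictOrder Alt3 (prof i))
    (w : Fin n → ℕ) (hw : ∀ i, 0 < w i) (hodd : Odd (∑ i, w i)) :
    (∀ comp : Fin n → Alt3 → Alt3 → Prop, Completes comp prof →
      wAmendWinner w comp [Alt3.A, Alt3.B, Alt3.P] = some Alt3.P) ↔
    (¬ ((∃ comp, Completes comp prof ∧ WBeats w comp Alt3.A Alt3.B) ∧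
        (∃ comp, Completes comp prof ∧ WBeats w comp Alt3.A Alt3.P)) ∧
     ¬ ((∃ comp, Completes comp prof ∧ WBeats w comp Alt3.B Alt3.A) ∧
        (∃ comp, Completes comp prof ∧ WBeats w comp Alt3.B Alt3.P))) := by
  have key : ∀ comp, Completes comp prof →
      (wAmendWinner w comp [Alt3.A, Alt3.B, Alt3.P] = some Alt3.P ↔
        ¬ (WBeats w comp Alt3.A Alt3.B ∧ WBeats w comp Alt3.A Alt3.P) ∧
        ¬ (WBeats w comp Alt3.B Alt3.A ∧ WBeats w comp Alt3.B Alt3.P)) := by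
    intro comp hc
    have h1 := beats_total w prof comp hc hodd Alt3.A Alt3.B (by decide)
    have h2 := beats_total w prof comp hc hodd Alt3.A Alt3.P (by decide)
    have h3 := beats_total w prof comp hc hodd Alt3.B Alt3.P (by decide)
    simp only [wAmendWinner, List.foldl]
    rw [h1, h2, h3]
    by_cases hBA : WBeats w comp Alt3.B Alt3.A <;>
    by_cases hPA : WBeats w comp Alt3.P Alt3.A <;>
    by_cases hPB : WBeats w comp Alt3.P Alt3.B <;> simp [hBA, hPA, hPB]
  constructor
  · intro h
    constructor
    · rintro ⟨e1, e2⟩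
      obtain ⟨comp, hc, ht⟩ := profile_top w prof hpo Alt3.A
      exact ((key comp hc).1 (h comp hc)).1 ⟨ht _ (by decide) e1, ht _ (by decide) e2⟩
    · rintro ⟨e1, e2⟩
      obtain ⟨comp, hc, ht⟩ := profile_top w prof hpo Alt3.B
      exact ((key comp hc).1 (h comp hc)).2 ⟨ht _ (by decide) e1, ht _ (by decide) e2⟩
  · rintro ⟨h1, h2⟩ comp hc
    exact (key comp hc).2 ⟨fun e => h1 ⟨⟨comp, hc, e.1⟩, ⟨comp, hc, e.2⟩⟩,
      fun e => h2 ⟨⟨comp, hc, e.1⟩, ⟨comp, hc, e.2⟩⟩⟩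
end
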